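/- For all f, g in the algebra 𝒜, ω(f ⋆ g*) = ∫ f(x) \overline{g}(x) d²x, where g* is the deformed involution; in particular the sesquilinear form (f,g) ↦ ω(f* ⋆ g) is a positive-definite inner product on 𝒜. -/

import Mathlib

open MeasureTheory Complex

/-- Fourier transform in the first variable:
(𝓕₀f)(p₀, x₁) = ∫ e^{-ip₀y₀} f(y₀, x₁) dy₀. -/
noncomputable def F0 (f : ℝ × ℝ → ℂ) : ℝ × ℝ → ℂ :=
  fun p => ∫ y0 : ℝ, Complex.exp (-Complex.I * (p.1 : ℂ) * (y0 : ℂ)) * f (y0, p.2)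

/-- The deformed (star) product of κ-Minkowski:
(f ⋆ g)(x) = (2π)⁻¹ ∫ e^{ip₀x₀} (𝓕₀f)(p₀,x₁) g(x₀, e^{-λp₀}x₁) dp₀. -/
noncomputable def sprod (lam : ℝ) (f g : ℝ × ℝ → ℂ) : ℝ × ℝ → ℂ :=
  fun x => (2 * Real.pi)⁻¹ • ∫ p0 : ℝ,
    Complex.exp (Complex.I * (p0 : ℂ) * (x.1 : ℂ)) * F0 f (p0, x.2)
      * g (x.1, Real.exp (-lam * p0) * x.2)

/-- The deformed involution:
f*(x) = (2π)⁻¹ ∫ e^{ip₀x₀} (𝓕₀ conj f)(p₀, e^{-λp₀}x₁) dp₀. -/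
noncomputable def sinv (lam : ℝ) (f : ℝ × ℝ → ℂ) : ℝ × ℝ → ℂ :=
  fun x => (2 * Real.pi)⁻¹ • ∫ p0 : ℝ,
    Complex.exp (Complex.I * (p0 : ℂ) * (x.1 : ℂ))
      * F0 (fun y => (starRingEnd ℂ) (f y)) (p0, Real.exp (-lam * p0) * x.2)

/-- Membership in the algebra 𝒜 = 𝓕(𝒮_c): f is the Fourier transform of a
Schwartz function with compact support in the first variable. -/
def InA (f : ℝ × ℝ → ℂ) : Prop :=
  ∃ h : SchwartzMap (ℝ × ℝ) ℂ,
    (∃ R : ℝ, ∀ p : ℝ × ℝ, R < |p.1| → h p = 0) ∧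
    ∀ x : ℝ × ℝ, f x = (2 * Real.pi)⁻¹ • ∫ p : ℝ × ℝ,
      Complex.exp (Complex.I * ((p.1 : ℂ) * (x.1 : ℂ) + (p.2 : ℂ) * (x.2 : ℂ))) * h p

/-- The invariant weight ω(f) = ∫ f(x) d²x. -/
noncomputable def omegaW (f : ℝ × ℝ → ℂ) : ℂ := ∫ x : ℝ × ℝ, f x

/-!
Integrating `f ⋆ g` first over `x₀` gives
`ω(f ⋆ g) = (2π)⁻¹ ∬ (𝓕₀f)(p₀, x₁) (𝓕₀g)(-p₀, e^{-λp₀}x₁) dp₀ dx₁`, whereas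
`(𝓕₀g*)(p₀, x₁) = conj ((𝓕₀g)(-p₀, e^{-λp₀}x₁))`. The two dilations cancel, so `ω(f ⋆ g*)` does not
depend on `λ`, and at `λ = 0` it is `∫ f conj(g)`. Likewise `ω(f* ⋆ f) = (2π)⁻¹ ∬ |𝓕₀f*|²`.
The decay of `g*` in `x₀` needed for Fubini and Fourier inversion comes from differentiating
`(𝓕₀g)(p₀, e^{-λp₀}x₁)` in `p₀`: each derivative has the same form for another Schwartz function.
-/

open scoped FourierTransform SchwartzMap ComplexConjugate LineDeriv

theorem norm_exp_neg_I_mul_mul (s t : ℝ) : ‖Complex.exp (-Complex.I * s * t)‖ = 1 := by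
  simp [Complex.norm_exp]

theorem inv_one_add_sq_le_one (t : ℝ) : (1 + t ^ 2)⁻¹ ≤ 1 :=
  inv_le_one_of_one_le₀ (le_add_of_nonneg_right (sq_nonneg t))

theorem F0_two_pi_mul (f : ℝ × ℝ → ℂ) (w y : ℝ) :
    F0 f (2 * Real.pi * w, y) = 𝓕 (fun t => f (t, y)) w := by
  rw [Real.fourier_real_eq_integral_exp_smul, F0]
  congr 1 with t
  rw [smul_eq_mul]
  congr 2
  push_cast
  ring

theorem F0_eq_fourier (f : ℝ × ℝ → ℂ) (p y : ℝ) :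
    F0 f (p, y) = 𝓕 (fun t => f (t, y)) ((2 * Real.pi)⁻¹ * p) := by
  rw [← F0_two_pi_mul, mul_inv_cancel_left₀ (by positivity)]

theorem norm_F0_le_integral_norm (f : ℝ × ℝ → ℂ) (p y : ℝ) :
    ‖F0 f (p, y)‖ ≤ ∫ t : ℝ, ‖f (t, y)‖ := by
  refine (norm_integral_le_integral_norm _).trans_eq ?_
  simp only [norm_mul, norm_exp_neg_I_mul_mul, one_mul]

theorem F0_conj (f : ℝ × ℝ → ℂ) (p y : ℝ) :
    F0 (fun x => conj (f x)) (p, y) = conj (F0 f (-p, y)) := by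
  rw [F0, F0, ← integral_conj]
  congr 1 with t
  rw [map_mul, ← Complex.exp_conj]
  simp only [map_mul, Complex.conj_I, Complex.conj_ofReal, Complex.ofReal_neg, neg_neg,
    mul_neg, neg_mul]

theorem F0_F0 {f : ℝ × ℝ → ℂ} {y : ℝ} (hf : Continuous fun t => f (t, y))
    (hfi : Integrable fun t => f (t, y)) (hFi : Integrable fun p => F0 f (p, y)) (t : ℝ) :
    F0 (F0 f) (-t, y) = (2 * Real.pi) • f (t, y) := by
  have h2pi : (0 : ℝ) < 2 * Real.pi := by positivity
  set u : ℝ → ℂ := fun t => f (t, y)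
  have hFu : Integrable (𝓕 u) := by
    simpa only [F0_two_pi_mul] using hFi.comp_mul_left' h2pi.ne'
  have hscale := Measure.integral_comp_mul_left
    (fun p : ℝ => Complex.exp (-Complex.I * ((-t : ℝ) : ℂ) * (p : ℂ)) * F0 f (p, y)) (2 * Real.pi)
  rw [abs_of_pos (inv_pos.2 h2pi), eq_inv_smul_iff₀ h2pi.ne'] at hscale
  calc F0 (F0 f) (-t, y)
      = (2 * Real.pi) • 𝓕⁻ (𝓕 u) t := by
        rw [F0, ← hscale, Real.fourierInv_eq']
        congr 2 with w
        rw [smul_eq_mul, F0_two_pi_mul]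
        congr 2
        simp only [RCLike.inner_apply, Real.ringHom_apply]
        push_cast
        ring
    _ = (2 * Real.pi) • f (t, y) := by rw [hf.fourierInv_fourier_eq hfi hFu]

/-- The inverse of the partial Fourier transform `F0`. -/
noncomputable def F0inv (f : ℝ × ℝ → ℂ) : ℝ × ℝ → ℂ :=
  fun x => (2 * Real.pi)⁻¹ • F0 f (-x.1, x.2)

theorem F0inv_apply (f : ℝ × ℝ → ℂ) (x : ℝ × ℝ) :
    F0inv f x = (2 * Real.pi)⁻¹ •
      ∫ p : ℝ, Complex.exp (Complex.I * (p : ℂ) * (x.1 : ℂ)) * f (p, x.2) := by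
  simp only [F0inv, F0, Complex.ofReal_neg, neg_mul_neg, mul_right_comm Complex.I (x.1 : ℂ)]

theorem F0_eq_two_pi_smul_F0inv (f : ℝ × ℝ → ℂ) (p y : ℝ) :
    F0 f (p, y) = (2 * Real.pi) • F0inv f (-p, y) := by
  rw [F0inv, neg_neg, smul_inv_smul₀ (by positivity)]

theorem F0_F0inv_eq_F0_F0 (f : ℝ × ℝ → ℂ) (p y : ℝ) :
    F0 (F0inv f) (p, y) = (2 * Real.pi)⁻¹ • F0 (F0 f) (-p, y) := by
  rw [F0, F0, ← integral_neg_eq_self, ← integral_smul]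
  congr 1 with t
  simp only [F0inv, mul_smul_comm, neg_neg, Complex.ofReal_neg, mul_neg, neg_mul]

/-- Continuous functions on the plane with quadratic decay in the first variable, uniformly in the
second: a class on which the partial Fourier transform in the first variable is well behaved. -/
def DecaysInFst (f : ℝ × ℝ → ℂ) : Prop :=
  Continuous f ∧ ∃ C, ∀ x, ‖f x‖ ≤ C * (1 + x.1 ^ 2)⁻¹

namespace DecaysInFst

variable {f f' f'' : ℝ × ℝ → ℂ}

theorem continuous (hf : DecaysInFst f) : Continuous f := hf.1

theorem integrable (hf : DecaysInFst f) (y : ℝ) : Integrable fun t => f (t, y) := by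
  obtain ⟨hc, C, hC⟩ := hf
  exact (integrable_inv_one_add_sq.const_mul C).mono'
    (Continuous.aestronglyMeasurable (by fun_prop)) (.of_forall fun t => hC (t, y))

theorem continuous_F0 (hf : DecaysInFst f) : Continuous (F0 f) := by
  obtain ⟨hc, C, hC⟩ := hf
  refine continuous_of_dominated (fun p => Continuous.aestronglyMeasurable (by fun_prop))
    (fun p => .of_forall fun t => ?_) (integrable_inv_one_add_sq.const_mul C)
    (.of_forall fun t => by fun_prop)
  rw [norm_mul, norm_exp_neg_I_mul_mul, one_mul]
  exact hC (t, p.2)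

theorem F0inv_F0 (hf : DecaysInFst f) (hF : DecaysInFst (F0 f)) : F0inv (F0 f) = f := by
  funext ⟨t, y⟩
  have hc := hf.continuous
  rw [F0inv, F0_F0 (by fun_prop) (hf.integrable y) (hF.integrable y),
    inv_smul_smul₀ (by positivity)]

theorem F0_F0inv (hf : DecaysInFst f) (hF : DecaysInFst (F0inv f)) : F0 (F0inv f) = f := by
  funext ⟨p, y⟩
  have hc := hf.continuous
  have hFi : Integrable fun p => F0 f (p, y) := by
    simp only [F0_eq_two_pi_smul_F0inv]
    exact (hF.integrable y).comp_neg.smul (2 * Real.pi)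
  rw [F0_F0inv_eq_F0_F0, F0_F0 (by fun_prop) (hf.integrable y) hFi, inv_smul_smul₀ (by positivity)]

protected theorem F0inv (hF : DecaysInFst (F0 f)) : DecaysInFst (F0inv f) := by
  obtain ⟨hc, C, hC⟩ := hF
  refine ⟨by unfold _root_.F0inv; fun_prop, (2 * Real.pi)⁻¹ * C, fun x => ?_⟩
  rw [_root_.F0inv, norm_smul, Real.norm_of_nonneg (by positivity), mul_assoc]
  gcongr
  simpa only [neg_sq] using hC (-x.1, x.2)

theorem F0_deriv_fst (hf : DecaysInFst f) (hf' : DecaysInFst f')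
    (hd : ∀ t y, HasDerivAt (fun t => f (t, y)) (f' (t, y)) t) (p y : ℝ) :
    F0 f' (p, y) = Complex.I * p * F0 f (p, y) := by
  have hderiv : deriv (fun t => f (t, y)) = fun t => f' (t, y) := funext fun t => (hd t y).deriv
  rw [F0_eq_fourier, F0_eq_fourier, ← hderiv, Real.fourier_deriv (hf.integrable y)
    (fun t => (hd t y).differentiableAt) (hderiv ▸ hf'.integrable y)]
  have hpi : (Real.pi : ℂ) ≠ 0 := by exact_mod_cast Real.pi_ne_zero
  simp only [smul_eq_mul]
  push_cast
  field_simp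

theorem norm_F0_le (hf : DecaysInFst f) (hf' : DecaysInFst f') (hf'' : DecaysInFst f'')
    (hd : ∀ t y, HasDerivAt (fun t => f (t, y)) (f' (t, y)) t)
    (hd' : ∀ t y, HasDerivAt (fun t => f' (t, y)) (f'' (t, y)) t) (p y : ℝ) :
    ‖F0 f (p, y)‖ ≤ ((∫ t : ℝ, ‖f (t, y)‖) + ∫ t : ℝ, ‖f'' (t, y)‖) * (1 + p ^ 2)⁻¹ := by
  have hsecond : F0 f'' (p, y) = -((p : ℂ) ^ 2 * F0 f (p, y)) := by
    rw [hf'.F0_deriv_fst hf'' hd', hf.F0_deriv_fst hf' hd]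
    linear_combination (p : ℂ) ^ 2 * F0 f (p, y) * Complex.I_sq
  have hnorm : p ^ 2 * ‖F0 f (p, y)‖ = ‖F0 f'' (p, y)‖ := by
    rw [hsecond, norm_neg, norm_mul, norm_pow, Complex.norm_real, Real.norm_eq_abs, sq_abs]
  rw [← div_eq_mul_inv, le_div_iff₀ (by positivity)]
  linarith [norm_F0_le_integral_norm f p y, norm_F0_le_integral_norm f'' p y]

theorem exists_integral_norm_le (hf : DecaysInFst f) : ∃ C, ∀ y, ∫ t : ℝ, ‖f (t, y)‖ ≤ C := by
  obtain ⟨C, hC⟩ := hf.2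
  exact ⟨∫ t : ℝ, C * (1 + t ^ 2)⁻¹, fun y => integral_mono (hf.integrable y).norm
    (integrable_inv_one_add_sq.const_mul C) fun t => hC (t, y)⟩

protected theorem F0 (hf : DecaysInFst f) (hf' : DecaysInFst f') (hf'' : DecaysInFst f'')
    (hd : ∀ t y, HasDerivAt (fun t => f (t, y)) (f' (t, y)) t)
    (hd' : ∀ t y, HasDerivAt (fun t => f' (t, y)) (f'' (t, y)) t) : DecaysInFst (F0 f) := by
  obtain ⟨C, hC⟩ := hf.exists_integral_norm_le
  obtain ⟨D, hD⟩ := hf''.exists_integral_norm_le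
  refine ⟨hf.continuous_F0, C + D, fun p => (hf.norm_F0_le hf' hf'' hd hd' p.1 p.2).trans ?_⟩
  gcongr
  exacts [hC p.2, hD p.2]

end DecaysInFst

section Schwartz

theorem exists_norm_schwartz_le {E : Type*} [NormedAddCommGroup E] [NormedSpace ℝ E]
    (f : 𝓢(ℝ × ℝ, E)) : ∃ C, ∀ x, ‖f x‖ ≤ C * (1 + x.1 ^ 2)⁻¹ * (1 + x.2 ^ 2)⁻¹ := by
  refine ⟨2 ^ 4 * (Finset.Iic ((4, 0) : ℕ × ℕ)).sup
    (fun m => SchwartzMap.seminorm ℝ m.1 m.2) f, fun x => ?_⟩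
  have hseminorm := SchwartzMap.one_add_le_sup_seminorm_apply (𝕜 := ℝ) (m := (4, 0)) (k := 4)
    (n := 0) le_rfl le_rfl f x
  rw [norm_iteratedFDeriv_zero] at hseminorm
  have hcoord {t : ℝ} (ht : |t| ≤ ‖x‖) : 1 + t ^ 2 ≤ (1 + ‖x‖) ^ 2 := by
    rw [← sq_abs t]
    nlinarith [abs_nonneg t]
  rw [mul_assoc, ← mul_inv, ← div_eq_mul_inv, le_div_iff₀ (by positivity), mul_comm]
  refine le_trans ?_ hseminorm
  gcongr
  calc (1 + x.1 ^ 2) * (1 + x.2 ^ 2) ≤ (1 + ‖x‖) ^ 2 * (1 + ‖x‖) ^ 2 := by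
        gcongr
        exacts [hcoord (norm_fst_le x), hcoord (norm_snd_le x)]
    _ = (1 + ‖x‖) ^ 4 := by ring

theorem decaysInFst_schwartz (f : 𝓢(ℝ × ℝ, ℂ)) : DecaysInFst f := by
  obtain ⟨C, hC⟩ := exists_norm_schwartz_le f
  have hC0 : 0 ≤ C := by simpa using (norm_nonneg _).trans (hC 0)
  exact ⟨f.continuous, C, fun x => (hC x).trans
    (mul_le_of_le_one_right (by positivity) (inv_one_add_sq_le_one _))⟩

theorem hasDerivAt_schwartz_fst (f : 𝓢(ℝ × ℝ, ℂ)) (t y : ℝ) :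
    HasDerivAt (fun t => f (t, y)) (∂_{((1, 0) : ℝ × ℝ)} f (t, y)) t := by
  rw [SchwartzMap.lineDerivOp_apply_eq_fderiv]
  exact (f.hasFDerivAt (t, y)).comp_hasDerivAt t ((hasDerivAt_id t).prodMk (hasDerivAt_const t y))

theorem hasDerivAt_schwartz_snd (f : 𝓢(ℝ × ℝ, ℂ)) (t y : ℝ) :
    HasDerivAt (fun y => f (t, y)) (∂_{((0, 1) : ℝ × ℝ)} f (t, y)) y := by
  rw [SchwartzMap.lineDerivOp_apply_eq_fderiv]
  exact (f.hasFDerivAt (t, y)).comp_hasDerivAt y ((hasDerivAt_const y t).prodMk (hasDerivAt_id y))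

theorem decaysInFst_F0_schwartz (f : 𝓢(ℝ × ℝ, ℂ)) : DecaysInFst (F0 f) :=
  (decaysInFst_schwartz f).F0 (decaysInFst_schwartz _) (decaysInFst_schwartz _)
    (hasDerivAt_schwartz_fst f) (hasDerivAt_schwartz_fst _)

theorem exists_integral_norm_schwartz_le (f : 𝓢(ℝ × ℝ, ℂ)) :
    ∃ C, ∀ y, ∫ t : ℝ, ‖f (t, y)‖ ≤ C * (1 + y ^ 2)⁻¹ := by
  obtain ⟨C, hC⟩ := exists_norm_schwartz_le f
  refine ⟨∫ t : ℝ, C * (1 + t ^ 2)⁻¹, fun y => ?_⟩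
  rw [← integral_mul_const]
  exact integral_mono ((decaysInFst_schwartz f).integrable y).norm
    ((integrable_inv_one_add_sq.const_mul C).mul_const _) fun t => hC (t, y)

theorem exists_norm_F0_schwartz_le (f : 𝓢(ℝ × ℝ, ℂ)) :
    ∃ C, ∀ p, ‖F0 f p‖ ≤ C * (1 + p.1 ^ 2)⁻¹ * (1 + p.2 ^ 2)⁻¹ := by
  obtain ⟨C, hC⟩ := exists_integral_norm_schwartz_le f
  obtain ⟨D, hD⟩ :=
    exists_integral_norm_schwartz_le (∂_{((1, 0) : ℝ × ℝ)} (∂_{((1, 0) : ℝ × ℝ)} f))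
  refine ⟨C + D, fun p => ?_⟩
  refine ((decaysInFst_schwartz f).norm_F0_le (decaysInFst_schwartz _) (decaysInFst_schwartz _)
    (hasDerivAt_schwartz_fst f) (hasDerivAt_schwartz_fst _) p.1 p.2).trans ?_
  rw [mul_right_comm]
  gcongr
  exact (add_le_add (hC p.2) (hD p.2)).trans_eq (add_mul _ _ _).symm

theorem integrable_of_norm_le_inv_one_add_sq_mul {E : Type*} [NormedAddCommGroup E]
    {f : ℝ × ℝ → E} (hf : Continuous f) {C : ℝ}
    (hC : ∀ x, ‖f x‖ ≤ C * (1 + x.1 ^ 2)⁻¹ * (1 + x.2 ^ 2)⁻¹) : Integrable f :=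
  ((integrable_inv_one_add_sq.const_mul C).mul_prod integrable_inv_one_add_sq).mono'
    hf.aestronglyMeasurable (.of_forall hC)

theorem integrable_F0_schwartz (f : 𝓢(ℝ × ℝ, ℂ)) : Integrable (F0 f) :=
  let ⟨_, hC⟩ := exists_norm_F0_schwartz_le f
  integrable_of_norm_le_inv_one_add_sq_mul (decaysInFst_F0_schwartz f).continuous hC

theorem F0inv_F0_schwartz (f : 𝓢(ℝ × ℝ, ℂ)) : F0inv (F0 f) = f :=
  (decaysInFst_schwartz f).F0inv_F0 (decaysInFst_F0_schwartz f)

/-- The pointwise complex conjugate of a Schwartz function, as a Schwartz function. -/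
noncomputable def schwartzConj (f : 𝓢(ℝ × ℝ, ℂ)) : 𝓢(ℝ × ℝ, ℂ) :=
  f.postcompCLM (Complex.conjCLE : ℂ →L[ℝ] ℂ)

theorem coe_schwartzConj (f : 𝓢(ℝ × ℝ, ℂ)) : ⇑(schwartzConj f) = fun x => conj (f x) := rfl

end Schwartz

section Dilation

/-- The action of the momentum `p₀` on the second variable by the dilation `e^{-λ p₀}`. -/
noncomputable def dilate (lam : ℝ) (f : ℝ × ℝ → ℂ) : ℝ × ℝ → ℂ :=
  fun p => f (p.1, Real.exp (-lam * p.1) * p.2)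

variable (lam : ℝ)

theorem DecaysInFst.dilate {f : ℝ × ℝ → ℂ} (hf : DecaysInFst f) : DecaysInFst (dilate lam f) := by
  obtain ⟨hc, C, hC⟩ := hf
  exact ⟨by unfold _root_.dilate; fun_prop, C, fun p => hC _⟩

theorem dilate_zero (f : ℝ × ℝ → ℂ) : dilate 0 f = f := by
  funext p
  simp [dilate]

/-- The Schwartz function `-i x₀ f - λ x₁ ∂₁f`, whose partial Fourier transform is the derivative of
that of `f` along the orbits `p₀ ↦ (p₀, e^{-λ p₀} x₁)`. -/
noncomputable def dilationDeriv (f : 𝓢(ℝ × ℝ, ℂ)) : 𝓢(ℝ × ℝ, ℂ) :=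
  -SchwartzMap.smulLeftCLM ℂ (fun x : ℝ × ℝ => x.1) (Complex.I • f) -
    lam • SchwartzMap.smulLeftCLM ℂ (fun x : ℝ × ℝ => x.2) (∂_{((0, 1) : ℝ × ℝ)} f)

theorem dilationDeriv_apply (f : 𝓢(ℝ × ℝ, ℂ)) (x : ℝ × ℝ) :
    dilationDeriv lam f x =
      -(Complex.I * x.1 * f x) - lam * x.2 * ∂_{((0, 1) : ℝ × ℝ)} f x := by
  have hfst : (fun x : ℝ × ℝ => x.1).HasTemperateGrowth :=
    (ContinuousLinearMap.fst ℝ ℝ ℝ).hasTemperateGrowth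
  have hsnd : (fun x : ℝ × ℝ => x.2).HasTemperateGrowth :=
    (ContinuousLinearMap.snd ℝ ℝ ℝ).hasTemperateGrowth
  simp only [dilationDeriv, sub_apply, neg_apply, smul_apply,
    SchwartzMap.smulLeftCLM_apply_apply hfst, SchwartzMap.smulLeftCLM_apply_apply hsnd,
    Complex.real_smul, smul_eq_mul]
  ring

theorem hasDerivAt_dilate_F0_schwartz (f : 𝓢(ℝ × ℝ, ℂ)) (p y : ℝ) :
    HasDerivAt (fun p => dilate lam (F0 f) (p, y)) (dilate lam (F0 (dilationDeriv lam f)) (p, y))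
      p := by
  obtain ⟨C, hC⟩ := (decaysInFst_schwartz (dilationDeriv lam f)).2
  have hf := f.continuous
  have hf' := (dilationDeriv lam f).continuous
  refine (hasDerivAt_integral_of_dominated_loc_of_deriv_le (s := Set.univ) Filter.univ_mem
    (F := fun (p t : ℝ) => Complex.exp (-Complex.I * p * t) * f (t, Real.exp (-lam * p) * y))
    (F' := fun (p t : ℝ) => Complex.exp (-Complex.I * p * t) *
      dilationDeriv lam f (t, Real.exp (-lam * p) * y))
    (.of_forall fun p => Continuous.aestronglyMeasurable (by fun_prop)) ?_
    (Continuous.aestronglyMeasurable (by fun_prop)) (.of_forall fun t p _ => ?_)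
    (integrable_inv_one_add_sq.const_mul C) (.of_forall fun t p _ => ?_)).2
  · exact ((decaysInFst_schwartz f).integrable _).bdd_mul (by fun_prop)
      (.of_forall fun t => (norm_exp_neg_I_mul_mul p t).le)
  · rw [norm_mul, norm_exp_neg_I_mul_mul, one_mul]
    exact hC _
  · have hexp : HasDerivAt (fun p : ℝ => Complex.exp (-Complex.I * p * t))
        (Complex.exp (-Complex.I * p * t) * (-Complex.I * t)) p := by
      simpa using (((hasDerivAt_id p).ofReal_comp.const_mul (-Complex.I)).mul_const (t : ℂ)).cexp
    have horbit : HasDerivAt (fun p : ℝ => Real.exp (-lam * p) * y)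
        (-lam * (Real.exp (-lam * p) * y)) p := by
      convert! (((hasDerivAt_id p).const_mul (-lam)).exp.mul_const y) using 1
      simp only [id_eq, mul_one]
      ring
    convert! hexp.mul ((hasDerivAt_schwartz_snd f t _).scomp p horbit) using 1
    rw [dilationDeriv_apply, Complex.real_smul]
    push_cast
    simp only [Function.comp_apply]
    ring

theorem decaysInFst_F0_dilate_F0_schwartz (f : 𝓢(ℝ × ℝ, ℂ)) :
    DecaysInFst (F0 (dilate lam (F0 f))) :=
  ((decaysInFst_F0_schwartz f).dilate lam).F0 ((decaysInFst_F0_schwartz _).dilate lam)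
    ((decaysInFst_F0_schwartz _).dilate lam) (hasDerivAt_dilate_F0_schwartz lam f)
    (hasDerivAt_dilate_F0_schwartz lam _)

end Dilation

section Weight

variable (lam : ℝ)

theorem sinv_eq_F0inv (f : ℝ × ℝ → ℂ) :
    sinv lam f = F0inv (dilate lam (F0 fun x => conj (f x))) := by
  funext x
  rw [F0inv_apply]
  rfl

theorem decaysInFst_sinv_schwartz (f : 𝓢(ℝ × ℝ, ℂ)) : DecaysInFst (sinv lam f) := by
  rw [sinv_eq_F0inv, ← coe_schwartzConj]
  exact (decaysInFst_F0_dilate_F0_schwartz lam (schwartzConj f)).F0inv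

theorem F0_sinv_schwartz (f : 𝓢(ℝ × ℝ, ℂ)) (p y : ℝ) :
    F0 (sinv lam f) (p, y) = conj (F0 f (-p, Real.exp (-lam * p) * y)) := by
  have hdilate : DecaysInFst (dilate lam (F0 fun x => conj (f x))) :=
    (decaysInFst_F0_schwartz (schwartzConj f)).dilate lam
  have hsinv := decaysInFst_sinv_schwartz lam f
  rw [sinv_eq_F0inv] at hsinv ⊢
  rw [hdilate.F0_F0inv hsinv, dilate, F0_conj]

theorem sinv_zero_schwartz (f : 𝓢(ℝ × ℝ, ℂ)) : sinv 0 f = fun x => conj (f x) := by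
  rw [sinv_eq_F0inv, dilate_zero, ← coe_schwartzConj, F0inv_F0_schwartz]

theorem sprod_zero_schwartz (f : 𝓢(ℝ × ℝ, ℂ)) (g : ℝ × ℝ → ℂ) (x : ℝ × ℝ) :
    sprod 0 f g x = f x * g x := by
  rw [← congrFun (F0inv_F0_schwartz f) x, F0inv_apply, sprod, smul_mul_assoc, ← integral_mul_const]
  simp only [neg_zero, zero_mul, Real.exp_zero, one_mul]

variable {f g : ℝ × ℝ → ℂ}

theorem integrable_sprod_integrand (hf : Integrable (F0 f)) (hg : DecaysInFst g) :
    Integrable fun z : ℝ × (ℝ × ℝ) => Complex.exp (Complex.I * z.2.1 * z.1) * F0 f z.2 *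
      g (z.1, Real.exp (-lam * z.2.1) * z.2.2) := by
  obtain ⟨hc, C, hC⟩ := hg
  have hmajorant : Integrable fun z : ℝ × (ℝ × ℝ) => ((1 + z.1 ^ 2)⁻¹ : ℂ) * F0 f z.2 := by
    have hprod := (integrable_inv_one_add_sq.ofReal (𝕜 := ℂ)).mul_prod hf
    push_cast at hprod
    exact hprod
  -- The decay of `g` supplies the integrable weight in the time variable.
  have hbounded := hmajorant.bdd_mul (c := C) (f := fun z => Complex.exp (Complex.I * z.2.1 * z.1) *
      (g (z.1, Real.exp (-lam * z.2.1) * z.2.2) * (1 + z.1 ^ 2)))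
    (Continuous.aestronglyMeasurable (by fun_prop)) (.of_forall fun z => ?_)
  · refine hbounded.congr (.of_forall fun z => ?_)
    have hne : (1 + z.1 ^ 2 : ℂ) ≠ 0 := by
      exact_mod_cast (by positivity : (1 + z.1 ^ 2 : ℝ) ≠ 0)
    field_simp
  · have hweight : ‖(1 + z.1 ^ 2 : ℂ)‖ = 1 + z.1 ^ 2 := by
      rw [← Complex.norm_of_nonneg (by positivity : (0 : ℝ) ≤ 1 + z.1 ^ 2)]
      push_cast
      rfl
    have hexp : ‖Complex.exp (Complex.I * z.2.1 * z.1)‖ = 1 := by simp [Complex.norm_exp]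
    rw [norm_mul, norm_mul, hexp, one_mul, hweight, ← le_div_iff₀ (by positivity), div_eq_mul_inv]
    exact hC _

theorem omegaW_sprod (hf : Integrable (F0 f)) (hg : DecaysInFst g) :
    omegaW (sprod lam f g) = (2 * Real.pi)⁻¹ •
      ∫ p : ℝ × ℝ, F0 f p * F0 g (-p.1, Real.exp (-lam * p.1) * p.2) := by
  set K : ℝ × (ℝ × ℝ) → ℂ := fun z => Complex.exp (Complex.I * z.2.1 * z.1) * F0 f z.2 *
    g (z.1, Real.exp (-lam * z.2.1) * z.2.2) with hK
  have hKi : Integrable K := integrable_sprod_integrand lam hf hg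
  let e : (ℝ × ℝ) × ℝ ≃ᵐ ℝ × (ℝ × ℝ) :=
    MeasurableEquiv.prodAssoc.trans (.prodCongr (.refl ℝ) .prodComm)
  have he : MeasurePreserving e :=
    ((MeasurePreserving.id volume).prod Measure.measurePreserving_swap).comp
      volume_preserving_prodAssoc
  calc omegaW (sprod lam f g)
      = (2 * Real.pi)⁻¹ • ∫ x : ℝ × ℝ, ∫ p : ℝ, K (e (x, p)) := integral_smul _ _
    _ = (2 * Real.pi)⁻¹ • ∫ z, K z := by
        rw [← integral_prod (fun z => K (e z))
          ((he.integrable_comp_emb e.measurableEmbedding).2 hKi)]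
        exact congrArg _ (he.integral_comp' K)
    _ = (2 * Real.pi)⁻¹ • ∫ p : ℝ × ℝ, ∫ t : ℝ, K (t, p) := by
        rw [← integral_prod_symm K hKi]
        rfl
    _ = _ := by
        congr 2 with p
        rw [F0.eq_def g, ← integral_const_mul]
        congr 1 with t
        simp only [hK]
        push_cast
        rw [neg_mul_neg]
        ring

theorem omegaW_sprod_sinv_schwartz (f g : 𝓢(ℝ × ℝ, ℂ)) :
    omegaW (sprod lam f (sinv lam g)) = (2 * Real.pi)⁻¹ • ∫ p, F0 f p * conj (F0 g p) := by
  rw [omegaW_sprod lam (integrable_F0_schwartz f) (decaysInFst_sinv_schwartz lam g)]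
  congr 2 with p
  rw [F0_sinv_schwartz, neg_neg, ← mul_assoc, ← Real.exp_add]
  simp

theorem omegaW_sprod_sinv_schwartz_eq_integral (f g : 𝓢(ℝ × ℝ, ℂ)) :
    omegaW (sprod lam f (sinv lam g)) = ∫ x, f x * conj (g x) := by
  rw [omegaW_sprod_sinv_schwartz lam, ← omegaW_sprod_sinv_schwartz 0, sinv_zero_schwartz, omegaW]
  simp only [sprod_zero_schwartz]

theorem omegaW_sinv_sprod_self (f : 𝓢(ℝ × ℝ, ℂ)) (hf : Integrable (F0 (sinv lam f))) :
    omegaW (sprod lam (sinv lam f) f) =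
      ((2 * Real.pi)⁻¹ * ∫ p, ‖F0 (sinv lam f) p‖ ^ 2 : ℝ) := by
  rw [omegaW_sprod lam hf (decaysInFst_schwartz f), Complex.real_smul, Complex.ofReal_mul,
    ← integral_complex_ofReal]
  congr 2 with p
  rw [Complex.ofReal_pow, ← Complex.mul_conj', F0_sinv_schwartz, Complex.conj_conj]

theorem eq_zero_of_F0_sinv_schwartz_eq_zero (f : 𝓢(ℝ × ℝ, ℂ)) (hf : F0 (sinv lam f) = 0) :
    ⇑f = 0 := by
  have hF0 : F0 f = 0 := by
    funext ⟨p, y⟩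
    have horbit := congrFun hf (-p, Real.exp (-lam * p) * y)
    rwa [F0_sinv_schwartz, neg_neg, ← mul_assoc, ← Real.exp_add, mul_neg, neg_add_cancel,
      Real.exp_zero, one_mul, Pi.zero_apply, map_eq_zero] at horbit
  rw [← F0inv_F0_schwartz f, hF0]
  funext x
  simp [F0inv, F0]

theorem integral_norm_sq_F0_sinv_schwartz_pos {f : 𝓢(ℝ × ℝ, ℂ)}
    (hf : Integrable (F0 (sinv lam f))) (hf0 : ⇑f ≠ 0) :
    0 < ∫ p, ‖F0 (sinv lam f) p‖ ^ 2 := by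
  have hcont := (decaysInFst_sinv_schwartz lam f).continuous_F0
  obtain ⟨C, hC⟩ := (decaysInFst_sinv_schwartz lam f).exists_integral_norm_le
  have hsq : Integrable fun p => ‖F0 (sinv lam f) p‖ ^ 2 := by
    simp only [sq]
    exact hf.norm.bdd_mul hf.norm.1 (.of_forall fun p =>
      (norm_norm _).trans_le ((norm_F0_le_integral_norm _ p.1 p.2).trans (hC p.2)))
  rw [integral_pos_iff_support_of_nonneg (fun p => sq_nonneg _) hsq]
  refine (hcont.norm.pow 2).isOpen_support.measure_pos _ (Function.support_nonempty_iff.2 ?_)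
  contrapose! hf0
  refine eq_zero_of_F0_sinv_schwartz_eq_zero lam f (funext fun p => ?_)
  simpa using congrFun hf0 p

theorem integrable_F0_sinv_schwartz {f : 𝓢(ℝ × ℝ, ℂ)} {R : ℝ}
    (hR : ∀ p : ℝ × ℝ, R < |p.1| → F0 f p = 0) : Integrable (F0 (sinv lam f)) := by
  obtain ⟨C, hC⟩ := exists_norm_F0_schwartz_le f
  have hC0 : 0 ≤ C := by simpa using (norm_nonneg _).trans (hC 0)
  refine integrable_of_norm_le_inv_one_add_sq_mul (C := C * Real.exp (2 * (|lam| * R)))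
    (decaysInFst_sinv_schwartz lam f).continuous_F0 fun ⟨p, y⟩ => ?_
  rw [F0_sinv_schwartz, RCLike.norm_conj]
  rcases lt_or_ge R |p| with hp | hp
  · rw [hR _ (by rwa [abs_neg]), norm_zero]
    positivity
  have hexp : 1 ≤ Real.exp (2 * (|lam| * R)) :=
    Real.one_le_exp (by have := (abs_nonneg p).trans hp; positivity)
  have hlamp : lam * p ≤ |lam| * R :=
    (le_abs_self _).trans ((abs_mul lam p).trans_le (by gcongr))
  have hdil : 1 ≤ Real.exp (2 * (|lam| * R)) * Real.exp (-lam * p) ^ 2 := by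
    rw [← Real.exp_nat_mul, ← Real.exp_add]
    refine Real.one_le_exp ?_
    push_cast
    linarith
  refine (hC _).trans ?_
  rw [neg_sq, mul_right_comm C (Real.exp _), mul_assoc _ (Real.exp _)]
  gcongr
  rw [← div_eq_mul_inv, le_div_iff₀ (by positivity), inv_mul_le_iff₀ (by positivity), mul_comm]
  nlinarith [mul_le_mul_of_nonneg_right hdil (sq_nonneg y)]

end Weight

section Algebra

/-- The full inverse Fourier transform on the plane, in the normalization of `InA`. -/
noncomputable def planeSynthesis (h : ℝ × ℝ → ℂ) : ℝ × ℝ → ℂ :=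
  fun x => (2 * Real.pi)⁻¹ • ∫ p : ℝ × ℝ,
    Complex.exp (Complex.I * ((p.1 : ℂ) * (x.1 : ℂ) + (p.2 : ℂ) * (x.2 : ℂ))) * h p

/-- The functions on the plane underlying a Schwartz map. -/
def IsSchwartz (f : ℝ × ℝ → ℂ) : Prop :=
  ∃ φ : 𝓢(ℝ × ℝ, ℂ), ⇑φ = f

theorem isSchwartz_planeSynthesis (h : 𝓢(ℝ × ℝ, ℂ)) : IsSchwartz (planeSynthesis h) := by
  let e := WithLp.prodContinuousLinearEquiv 2 ℝ ℝ ℝ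
  let h' : 𝓢(WithLp 2 (ℝ × ℝ), ℂ) := SchwartzMap.compCLMOfContinuousLinearEquiv ℝ e h
  have hpi : (2 * Real.pi)⁻¹ ≠ 0 := by positivity
  let d : (ℝ × ℝ) ≃L[ℝ] WithLp 2 (ℝ × ℝ) :=
    (ContinuousLinearEquiv.smulLeft (Units.mk0 _ hpi) : (ℝ × ℝ) ≃L[ℝ] (ℝ × ℝ)).trans e.symm
  refine ⟨(2 * Real.pi)⁻¹ • SchwartzMap.compCLMOfContinuousLinearEquiv ℝ d (𝓕⁻ h'),
    funext fun x => ?_⟩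
  simp only [smul_apply, SchwartzMap.compCLMOfContinuousLinearEquiv_apply,
    Function.comp_apply, SchwartzMap.fourierInv_coe, Real.fourierInv_eq', planeSynthesis]
  congr 1
  rw [← (WithLp.volume_preserving_toLp ℝ ℝ).integral_comp
    (MeasurableEquiv.toLp 2 (ℝ × ℝ)).measurableEmbedding]
  congr 1 with p
  have hd : d x = WithLp.toLp 2 ((2 * Real.pi)⁻¹ * x.1, (2 * Real.pi)⁻¹ * x.2) := rfl
  have hh : h' (WithLp.toLp 2 p) = h p := rfl
  have hpi' : (Real.pi : ℂ) ≠ 0 := by exact_mod_cast Real.pi_ne_zero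
  simp only [hd, hh, WithLp.prod_inner_apply, smul_eq_mul]
  congr 2
  simp only [RCLike.inner_apply, Real.ringHom_apply]
  push_cast
  field_simp

/-- The Schwartz function with its two variables exchanged. -/
noncomputable def schwartzSwap (h : 𝓢(ℝ × ℝ, ℂ)) : 𝓢(ℝ × ℝ, ℂ) :=
  SchwartzMap.compCLMOfContinuousLinearEquiv ℝ (ContinuousLinearEquiv.prodComm ℝ ℝ ℝ) h

theorem schwartzSwap_apply (h : 𝓢(ℝ × ℝ, ℂ)) (p q : ℝ) : schwartzSwap h (q, p) = h (p, q) := rfl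

theorem planeSynthesis_eq_F0inv (h : 𝓢(ℝ × ℝ, ℂ)) :
    planeSynthesis h = F0inv fun x => F0 (schwartzSwap h) (-x.2, x.1) := by
  funext x
  have hint : Integrable fun p : ℝ × ℝ =>
      Complex.exp (Complex.I * ((p.1 : ℂ) * (x.1 : ℂ) + (p.2 : ℂ) * (x.2 : ℂ))) * h p :=
    h.integrable.bdd_mul (c := 1) (Continuous.aestronglyMeasurable (by fun_prop))
      (.of_forall fun p => by simp [Complex.norm_exp])
  rw [F0inv_apply, planeSynthesis, Measure.volume_eq_prod, integral_prod _ hint]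
  congr 2 with p
  rw [F0, ← integral_const_mul]
  congr 1 with q
  rw [schwartzSwap_apply, ← mul_assoc, ← Complex.exp_add]
  congr 2
  push_cast
  ring

theorem F0_planeSynthesis (h : 𝓢(ℝ × ℝ, ℂ)) (p y : ℝ) :
    F0 (planeSynthesis h) (p, y) = F0 (schwartzSwap h) (-y, p) := by
  have hsynthesis : DecaysInFst (planeSynthesis h) := by
    obtain ⟨φ, hφ⟩ := isSchwartz_planeSynthesis h
    exact hφ ▸ decaysInFst_schwartz φ
  have hdecay : DecaysInFst fun x => F0 (schwartzSwap h) (-x.2, x.1) := by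
    obtain ⟨C, hC⟩ := exists_norm_F0_schwartz_le (schwartzSwap h)
    have hC0 : 0 ≤ C := by simpa using (norm_nonneg _).trans (hC 0)
    have hc := (decaysInFst_F0_schwartz (schwartzSwap h)).continuous
    refine ⟨by fun_prop, C, fun x => (hC _).trans ?_⟩
    gcongr
    exact mul_le_of_le_one_right hC0 (inv_one_add_sq_le_one _)
  rw [planeSynthesis_eq_F0inv] at hsynthesis ⊢
  rw [hdecay.F0_F0inv hsynthesis]

theorem InA.exists_eq_planeSynthesis {f : ℝ × ℝ → ℂ} (hf : InA f) :
    ∃ h : 𝓢(ℝ × ℝ, ℂ), (∃ R, ∀ p : ℝ × ℝ, R < |p.1| → h p = 0) ∧ f = planeSynthesis h :=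
  let ⟨h, hR, hfh⟩ := hf
  ⟨h, hR, funext hfh⟩

theorem InA.isSchwartz {f : ℝ × ℝ → ℂ} (hf : InA f) : IsSchwartz f := by
  obtain ⟨h, -, rfl⟩ := hf.exists_eq_planeSynthesis
  exact isSchwartz_planeSynthesis h

theorem InA.exists_F0_eq_zero {f : ℝ × ℝ → ℂ} (hf : InA f) :
    ∃ R, ∀ p : ℝ × ℝ, R < |p.1| → F0 f p = 0 := by
  obtain ⟨h, ⟨R, hR⟩, rfl⟩ := hf.exists_eq_planeSynthesis
  refine ⟨R, fun p hp => ?_⟩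
  have hslice (q : ℝ) : schwartzSwap h (q, p.1) = 0 := hR (p.1, q) hp
  rw [F0_planeSynthesis, F0]
  simp only [hslice, mul_zero, integral_zero]

theorem InA.integrable_F0_sinv {f : ℝ × ℝ → ℂ} (hf : InA f) (lam : ℝ) :
    Integrable (F0 (sinv lam f)) := by
  obtain ⟨R, hR⟩ := hf.exists_F0_eq_zero
  obtain ⟨φ, rfl⟩ := hf.isSchwartz
  exact integrable_F0_sinv_schwartz lam hR

end Algebra

theorem stmt8_general (lam : ℝ) :
    (∀ f g : ℝ × ℝ → ℂ, IsSchwartz f → IsSchwartz g →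
      omegaW (sprod lam f (sinv lam g)) = ∫ x : ℝ × ℝ, f x * conj (g x)) ∧
    (∀ f : ℝ × ℝ → ℂ, IsSchwartz f → Integrable (F0 (sinv lam f)) →
      (omegaW (sprod lam (sinv lam f) f)).im = 0 ∧
      0 ≤ (omegaW (sprod lam (sinv lam f) f)).re ∧
      (f ≠ 0 → 0 < (omegaW (sprod lam (sinv lam f) f)).re)) := by
  constructor
  · rintro _ _ ⟨f, rfl⟩ ⟨g, rfl⟩
    exact omegaW_sprod_sinv_schwartz_eq_integral lam f g
  · rintro _ ⟨f, rfl⟩ hf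
    rw [omegaW_sinv_sprod_self lam f hf, Complex.ofReal_im, Complex.ofReal_re]
    have hpi : 0 < (2 * Real.pi)⁻¹ := by positivity
    exact ⟨rfl, mul_nonneg hpi.le (integral_nonneg fun p => sq_nonneg _),
      fun hf0 => mul_pos hpi (integral_norm_sq_F0_sinv_schwartz_pos lam hf hf0)⟩

/-- ω(f ⋆ g*) = ∫ f(x) conj(g)(x) d²x for f, g ∈ 𝒜; in particular
(f,g) ↦ ω(f* ⋆ g) is a positive-definite inner product on 𝒜. -/
theorem stmt8 (lam : ℝ) (hlam : 0 < lam) :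
    (∀ f g : ℝ × ℝ → ℂ, InA f → InA g →
      omegaW (sprod lam f (sinv lam g))
        = ∫ x : ℝ × ℝ, f x * (starRingEnd ℂ) (g x)) ∧
    (∀ f : ℝ × ℝ → ℂ, InA f →
      (omegaW (sprod lam (sinv lam f) f)).im = 0 ∧
      0 ≤ (omegaW (sprod lam (sinv lam f) f)).re ∧
      (f ≠ 0 → 0 < (omegaW (sprod lam (sinv lam f) f)).re)) :=
  ⟨fun f g hf hg => (stmt8_general lam).1 f g hf.isSchwartz hg.isSchwartz,
    fun f hf => (stmt8_general lam).2 f hf.isSchwartz (hf.integrable_F0_sinv lam)⟩
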